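/- There exists a pair (ᾱ, β̄) in the achievable storage-retrieval rate region R of the (2,2) PIR problem with β̄ = 3/4 and ᾱ + 6β̄ < 6 (namely ᾱ = 1/4 + (3/4)·log₂ 3 < 3/2); consequently, non-linear (2,2) PIR codes achieve a pair that is not achievable by any linear (2,2) PIR code. -/

import Mathlib

open scoped BigOperators

namespace PIR

/-- Messages are length-`L` vectors over `F_2`. -/
abbrev Msg (L : ℕ) := Fin L → ZMod 2

/-- A (2,2) PIR code (without the correctness condition) with message length `L`
and query alphabet `Q`.  The two messages are independent and uniform on `F_2^L`;
the queries are independent of the messages (built into the model: the query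
distribution `P k` for desired message `k` does not depend on the messages). -/
structure CodeBase (L : ℕ) (Q : Type) [Fintype Q] [DecidableEq Q] where
  /-- query distribution for desired message index `k` -/
  P : Fin 2 → Q × Q → ℝ
  P_nonneg : ∀ k qq, 0 ≤ P k qq
  P_sum : ∀ k, ∑ qq : Q × Q, P k qq = 1
  /-- number of stored `F_2` symbols at database `n` -/
  stor : Fin 2 → ℕ
  /-- storage encoders -/
  phi : (n : Fin 2) → Msg L × Msg L → (Fin (stor n) → ZMod 2)
  /-- answer lengths -/
  blen : Fin 2 → Q → ℕ
  /-- deterministic answer functions -/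
  ans : (n : Fin 2) → (q : Q) → (Fin (stor n) → ZMod 2) → (Fin (blen n q) → ZMod 2)
  /-- decoding functions -/
  dec : (k : Fin 2) → (q₁ q₂ : Q) → (Fin (blen 0 q₁) → ZMod 2) →
      (Fin (blen 1 q₂) → ZMod 2) → Msg L
  /-- Privacy: for each database `n`, the joint distribution of
  `(Q_n^{[k]}, A_n^{[k]}, S_n)` is the same for `k = 1, 2`.  Since the answer
  `A_n` is the fixed deterministic function `ans` of `(Q_n, S_n)` (not
  depending on `k`), this is expressed as equality of the joint distributions of
  `(Q_n, S_n)` (messages uniform, queries independent of messages). -/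
  privacy : ∀ (n : Fin 2) (q : Q) (s : Fin (stor n) → ZMod 2),
    (∑ qq : Q × Q, if (if n = 0 then qq.1 else qq.2) = q then P 0 qq else 0) *
      ((Finset.univ.filter (fun w : Msg L × Msg L => phi n w = s)).card : ℝ) =
    (∑ qq : Q × Q, if (if n = 0 then qq.1 else qq.2) = q then P 1 qq else 0) *
      ((Finset.univ.filter (fun w : Msg L × Msg L => phi n w = s)).card : ℝ)

variable {L : ℕ} {Q : Type} [Fintype Q] [DecidableEq Q]

/-- The desired message `W_k`. -/
def target (k : Fin 2) (w : Msg L × Msg L) : Msg L := if k = 0 then w.1 else w.2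

/-- The decoder output `Ŵ_k` when the realized queries are `qq` and the messages `w`. -/
def retrieved (C : CodeBase L Q) (k : Fin 2) (qq : Q × Q) (w : Msg L × Msg L) : Msg L :=
  C.dec k qq.1 qq.2 (C.ans 0 qq.1 (C.phi 0 w)) (C.ans 1 qq.2 (C.phi 1 w))

/-- Zero-error correctness: `Ŵ_k = W_k` for all realizations. -/
def IsZeroError (C : CodeBase L Q) : Prop :=
  ∀ (k : Fin 2) (w : Msg L × Msg L) (qq : Q × Q), C.P k qq ≠ 0 →
    retrieved C k qq w = target k w

/-- The average probability of error `P_e`. -/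
noncomputable def Pe (C : CodeBase L Q) : ℝ :=
  (1/2) * ∑ k : Fin 2, ∑ w : Msg L × Msg L, ∑ qq : Q × Q,
    ((2:ℝ)^(2*L))⁻¹ * C.P k qq * (if retrieved C k qq w ≠ target k w then 1 else 0)

/-- The retrieval rate `β_n = E[β_n^{(Q_n)}]` (the marginal of `Q_n` is the same
for `k=1,2` by privacy; we use `k=1`, i.e. index `0`). -/
noncomputable def betaRate (C : CodeBase L Q) (n : Fin 2) : ℝ :=
  ∑ qq : Q × Q, C.P 0 qq * (C.blen n (if n = 0 then qq.1 else qq.2) : ℝ)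

/-- A linear PIR code: storage encoders and answer functions are `F_2`-linear. -/
def IsLinear (C : CodeBase L Q) : Prop :=
  (∀ n : Fin 2, IsLinearMap (ZMod 2) (C.phi n)) ∧
  (∀ (n : Fin 2) (q : Q), IsLinearMap (ZMod 2) (C.ans n q))

/-- A bundled PIR code (with its query alphabet). -/
structure Code (L : ℕ) where
  Q : Type
  [fQ : Fintype Q]
  [dQ : DecidableEq Q]
  base : CodeBase L Q

attribute [instance] Code.fQ Code.dQ

/-- A normalized storage-retrieval pair `(ᾱ, β̄)` is achievable. -/
def Achievable (ab : ℝ × ℝ) : Prop :=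
  ∀ ε > (0:ℝ), ∃ L₀ : ℕ, ∀ L ≥ L₀, ∃ C : Code L,
    IsZeroError C.base ∧
    ((C.base.stor 0 + C.base.stor 1 : ℕ) : ℝ) / 2 ≤ L * (ab.1 + ε) ∧
    (betaRate C.base 0 + betaRate C.base 1) / 2 ≤ L * (ab.2 + ε)

/-- Achievability by linear codes. -/
def LinAchievable (ab : ℝ × ℝ) : Prop :=
  ∀ ε > (0:ℝ), ∃ L₀ : ℕ, ∀ L ≥ L₀, ∃ C : Code L,
    IsZeroError C.base ∧ IsLinear C.base ∧
    ((C.base.stor 0 + C.base.stor 1 : ℕ) : ℝ) / 2 ≤ L * (ab.1 + ε) ∧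
    (betaRate C.base 0 + betaRate C.base 1) / 2 ≤ L * (ab.2 + ε)

/-- The achievable storage-retrieval rate region `R`. -/
def Region : Set (ℝ × ℝ) := { ab | Achievable ab }

/-- The query distribution used for the `(2,2)` PIR system: for message 1,
uniform on `{(1,1),(2,2)}`; for message 2, uniform on `{(1,2),(2,1)}`. -/
noncomputable def stdP : Fin 2 → Fin 2 × Fin 2 → ℝ :=
  fun k qq => if (k = 0 ∧ qq.1 = qq.2) ∨ (k = 1 ∧ qq.1 ≠ qq.2) then 1/2 else 0

/-!
*Linear codes.* For a linear code, an answer is described by the subspace of message pairs on which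
it vanishes. Suppose database `n` receives the query `q` when message 1 is wanted and `q'` when
message 2 is wanted, both next to the same query to the other database. By correctness the kernel of
the common answer meets those of the answers to `q` and `q'` inside the complementary subspaces
`W₁ = 0` and `W₂ = 0`, so a dimension count bounds the storage of database `n` from below. Privacy
makes the marginal query distributions independent of the wanted message, which lets these
inequalities be averaged to `12 L ≤ α₁ + α₂ + 6 (β₁ + β₂)`.

*A non-linear code.* Read the two messages as one word over the four symbols of `F₂ × F₂`, and
suppose first that each symbol occurs exactly `m` times. The positions of the symbols `(1,1)` and
`(1,0)` reveal `W₁`, as do those of `(0,0)` and `(0,1)`; the positions of `(1,1)` and `(0,1)` reveal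
`W₂`, as do those of `(0,0)` and `(1,0)`. So database 1 answers with the positions of `(1,1)` or
`(0,0)` and database 2 with those of `(1,0)` or `(0,1)`. The second answer leaves only
`choose (3m) m` candidates for the first, which may therefore be replaced by a random hash of about
`log₂ (choose (3m) m)` bits, good for at least half of the balanced words. The good words have
density at least `1 / (32 m³)`, so polynomially many translates of them cover all words, and naming
the translate costs only `O(log m)` further bits. With `L ≈ 4m`, the estimates
`log₂ (choose (3m) m) ≤ m (3 log₂ 3 - 2)` and `log₂ (choose (4m) m) ≤ m (8 - 3 log₂ 3)` give the
pair `(1/4 + 3/4 log₂ 3, 3/4)`.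
-/

section Subspaces

open Module Submodule

variable {K V : Type*} [DivisionRing K] [AddCommGroup V] [Module K V] [FiniteDimensional K V]

theorem finrank_add_finrank_le_of_disjoint_of_le {X Y Z : Submodule K V} (h : Disjoint X Y)
    (hX : X ≤ Z) (hY : Y ≤ Z) : finrank K X + finrank K Y ≤ finrank K Z := by
  have hsum := finrank_sup_add_finrank_inf_eq X Y
  rw [h.eq_bot, finrank_bot, add_zero] at hsum
  exact hsum ▸ finrank_mono (sup_le hX hY)

theorem finrank_add_finrank_le_finrank_add_finrank_inf (X Y : Submodule K V) :
    finrank K X + finrank K Y ≤ finrank K V + finrank K ↥(X ⊓ Y) := by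
  have hsum := finrank_sup_add_finrank_inf_eq X Y
  have hle := finrank_le (X ⊔ Y)
  omega

theorem finrank_le_finrank_ker_add {m : ℕ} (f : V →ₗ[K] (Fin m → K)) :
    finrank K V ≤ finrank K (LinearMap.ker f) + m := by
  have hrank := f.finrank_range_add_finrank_ker
  have hrange : finrank K (LinearMap.range f) ≤ m := by simpa using finrank_le (LinearMap.range f)
  omega

-- Inside `A₁ ⊔ A₂`, the independent subspaces `K₁` and `K₂` contain `(A₁ ⊓ B) ⊕ (A₂ ⊓ K₁)` and
-- `(A₂ ⊓ B) ⊕ (A₁ ⊓ K₂)` respectively.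
theorem finrank_inf_add_le_of_inf_le {K₁ K₂ A₁ A₂ B : Submodule K V} (hK : Disjoint K₁ K₂)
    (h₁ : A₁ ⊓ B ≤ K₁) (h₂ : A₂ ⊓ B ≤ K₂) :
    finrank K ↥(A₁ ⊓ A₂) + finrank K ↥(A₂ ⊓ K₁) + finrank K ↥(A₁ ⊓ K₂) + finrank K ↥(A₁ ⊓ B) +
      finrank K ↥(A₂ ⊓ B) ≤ finrank K A₁ + finrank K A₂ := by
  have hK₁ : finrank K ↥(A₁ ⊓ B) + finrank K ↥(A₂ ⊓ K₁) ≤ finrank K ↥((A₁ ⊔ A₂) ⊓ K₁) := by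
    refine finrank_add_finrank_le_of_disjoint_of_le ?_
      (le_inf (inf_le_left.trans le_sup_left) h₁) (inf_le_inf_right _ le_sup_right)
    exact disjoint_iff_inf_le.2 <| hK.le_bot.trans' <| le_inf (inf_le_right.trans inf_le_right) <|
      h₂.trans' <| le_inf (inf_le_right.trans inf_le_left) (inf_le_left.trans inf_le_right)
  have hK₂ : finrank K ↥(A₂ ⊓ B) + finrank K ↥(A₁ ⊓ K₂) ≤ finrank K ↥((A₁ ⊔ A₂) ⊓ K₂) := by
    refine finrank_add_finrank_le_of_disjoint_of_le ?_
      (le_inf (inf_le_left.trans le_sup_right) h₂) (inf_le_inf_right _ le_sup_left)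
    exact disjoint_iff_inf_le.2 <| hK.le_bot.trans' <| le_inf (h₁.trans' <|
      le_inf (inf_le_right.trans inf_le_left) (inf_le_left.trans inf_le_right))
      (inf_le_right.trans inf_le_right)
  have hsup := finrank_add_finrank_le_of_disjoint_of_le (hK.mono inf_le_right inf_le_right)
    (inf_le_left : (A₁ ⊔ A₂) ⊓ K₁ ≤ A₁ ⊔ A₂) inf_le_left
  have hsum := finrank_sup_add_finrank_inf_eq A₁ A₂
  omega

end Subspaces

section WeightedSums

variable {Ω X : Type*}

theorem exists_separating_of_le_add [Finite Ω] {F G : Ω → ℝ} {S T : Set Ω} {c : ℝ}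
    (h : ∀ ω ∈ S, ∀ ω' ∈ T, c ≤ F ω + G ω') :
    ∃ a, (∀ ω ∈ S, a ≤ F ω) ∧ ∀ ω' ∈ T, c - a ≤ G ω' := by
  rcases S.eq_empty_or_nonempty with rfl | hS
  · obtain ⟨b, hb⟩ := (Set.finite_range G).bddBelow
    exact ⟨c - b, by simp, fun ω' _ => by simpa using hb (Set.mem_range_self ω')⟩
  · obtain ⟨ω₀, hω₀, hmin⟩ := Set.exists_min_image S F S.toFinite hS
    exact ⟨F ω₀, hmin, fun ω' hω' => by linarith [h ω₀ hω₀ ω' hω']⟩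

variable [Fintype Ω]

theorem dotProduct_mono_of_ne_zero {p f g : Ω → ℝ} (hp : 0 ≤ p)
    (h : ∀ ω, p ω ≠ 0 → f ω ≤ g ω) : p ⬝ᵥ f ≤ p ⬝ᵥ g := by
  refine Finset.sum_le_sum fun ω _ => ?_
  rcases eq_or_ne (p ω) 0 with hω | hω
  · simp [hω]
  · exact mul_le_mul_of_nonneg_left (h ω hω) (hp ω)

theorem dotProduct_const_of_sum_eq_one {p : Ω → ℝ} (hp : ∑ ω, p ω = 1) (c : ℝ) :
    (p ⬝ᵥ fun _ => c) = c := by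
  rw [dotProduct, ← Finset.sum_mul, hp, one_mul]

theorem dotProduct_comp_eq_of_marginal_eq [DecidableEq X] {p r : Ω → ℝ} {π : Ω → X}
    (h : ∀ x, (∑ ω, if π ω = x then p ω else 0) = ∑ ω, if π ω = x then r ω else 0)
    (f : X → ℝ) : p ⬝ᵥ (f ∘ π) = r ⬝ᵥ (f ∘ π) := by
  have push (w : Ω → ℝ) :
      w ⬝ᵥ (f ∘ π) =
        ∑ x ∈ Finset.univ.image π, (∑ ω, if π ω = x then w ω else 0) * f x := by
    simp_rw [Finset.sum_mul, ite_mul, zero_mul]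
    rw [Finset.sum_comm]
    simp [dotProduct]
  simp_rw [push, h]

/- On each fiber of `π`, a constant `f x` separates `F` from `c - G`; since `p` and `r` have the
same marginal under `π`, the contributions of `f` cancel. -/
theorem le_dotProduct_add_dotProduct_of_marginal_eq [DecidableEq X]
    {p r : Ω → ℝ} {π : Ω → X} (hp : 0 ≤ p) (hr : 0 ≤ r) (hr_sum : ∑ ω, r ω = 1)
    (hmarg : ∀ x, (∑ ω, if π ω = x then p ω else 0) = ∑ ω, if π ω = x then r ω else 0)
    {F G : Ω → ℝ} {c : ℝ}
    (h : ∀ ω ω', π ω = π ω' → p ω ≠ 0 → r ω' ≠ 0 → c ≤ F ω + G ω') :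
    c ≤ p ⬝ᵥ F + r ⬝ᵥ G := by
  have separate (x : X) : ∃ a, (∀ ω ∈ {ω | π ω = x ∧ p ω ≠ 0}, a ≤ F ω) ∧
      ∀ ω' ∈ {ω' | π ω' = x ∧ r ω' ≠ 0}, c - a ≤ G ω' :=
    exists_separating_of_le_add fun ω hω ω' hω' => h ω ω' (hω.1.trans hω'.1.symm) hω.2 hω'.2
  choose f hfF hfG using separate
  have hF : p ⬝ᵥ (f ∘ π) ≤ p ⬝ᵥ F :=
    dotProduct_mono_of_ne_zero hp fun ω hω => hfF (π ω) ω ⟨rfl, hω⟩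
  have hG : r ⬝ᵥ ((fun _ => c) - f ∘ π) ≤ r ⬝ᵥ G :=
    dotProduct_mono_of_ne_zero hr fun ω hω => hfG (π ω) ω ⟨rfl, hω⟩
  rw [dotProduct_sub, dotProduct_const_of_sum_eq_one hr_sum,
    ← dotProduct_comp_eq_of_marginal_eq hmarg] at hG
  linarith

end WeightedSums

/-- The query sent to database `n` when the pair of queries is `qq`. -/
def query {α : Type*} (n : Fin 2) (qq : α × α) : α := if n = 0 then qq.1 else qq.2

theorem sum_P_query_eq (C : CodeBase L Q) (n : Fin 2) (q : Q) :
    (∑ qq, if query n qq = q then C.P 0 qq else 0) =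
      ∑ qq, if query n qq = q then C.P 1 qq else 0 := by
  refine mul_right_cancel₀ ?_ (C.privacy n q (C.phi n 0))
  exact Nat.cast_ne_zero.2 (Finset.card_pos.2 ⟨0, by simp⟩).ne'

section LinearConverse

open Module

/-- The pairs of messages whose `k`-th message vanishes. -/
def targetKer (L : ℕ) (k : Fin 2) : Submodule (ZMod 2) (Msg L × Msg L) where
  carrier := {w | target k w = 0}
  add_mem' {v w} hv hw := by simp_all [target]; split_ifs at * <;> simp_all
  zero_mem' := by simp [target]
  smul_mem' c w hw := by simp_all [target]; split_ifs at * <;> simp_all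

theorem disjoint_targetKer : Disjoint (targetKer L 0) (targetKer L 1) :=
  Submodule.disjoint_def.2 fun _ h₀ h₁ => Prod.ext h₀ h₁

variable {C : CodeBase L Q}

/-- The storage encoder of database `n` of a linear code, as a linear map. -/
def storageMap (hC : IsLinear C) (n : Fin 2) :
    Msg L × Msg L →ₗ[ZMod 2] (Fin (C.stor n) → ZMod 2) := (hC.1 n).mk' _

/-- The answer of database `n` of a linear code to query `q`, as a linear map of the messages. -/
def answerMap (hC : IsLinear C) (n : Fin 2) (q : Q) :
    Msg L × Msg L →ₗ[ZMod 2] (Fin (C.blen n q) → ZMod 2) :=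
  (hC.2 n q).mk' _ ∘ₗ storageMap hC n

/-- The messages for which database `n` answers query `q` by zero. The dimension of such a kernel
is the information about the messages that the answer leaves undetermined. -/
abbrev answerKer (hC : IsLinear C) (n : Fin 2) (q : Q) : Submodule (ZMod 2) (Msg L × Msg L) :=
  LinearMap.ker (answerMap hC n q)

/-- The messages for which both databases answer the queries `qq` by zero. -/
def jointKer (hC : IsLinear C) (qq : Q × Q) : Submodule (ZMod 2) (Msg L × Msg L) :=
  answerKer hC 0 qq.1 ⊓ answerKer hC 1 qq.2

theorem jointKer_eq (hC : IsLinear C) (n : Fin 2) (qq : Q × Q) :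
    jointKer hC qq = answerKer hC n (query n qq) ⊓ answerKer hC (n + 1) (query (n + 1) qq) := by
  fin_cases n
  · rfl
  · exact inf_comm _ _

theorem jointKer_le_targetKer (hC : IsLinear C) (hz : IsZeroError C) {k : Fin 2} {qq : Q × Q}
    (hqq : C.P k qq ≠ 0) : jointKer hC qq ≤ targetKer L k := by
  intro w hw
  have h₀ : C.ans 0 qq.1 (C.phi 0 w) = C.ans 0 qq.1 (C.phi 0 0) :=
    hw.1.trans (map_zero (answerMap hC 0 qq.1)).symm
  have h₁ : C.ans 1 qq.2 (C.phi 1 w) = C.ans 1 qq.2 (C.phi 1 0) :=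
    hw.2.trans (map_zero (answerMap hC 1 qq.2)).symm
  calc target k w = retrieved C k qq w := (hz k w qq hqq).symm
    _ = retrieved C k qq 0 := by rw [retrieved, retrieved, h₀, h₁]
    _ = target k 0 := hz k 0 qq hqq
    _ = 0 := by simp [target]

theorem finrank_msg_prod_msg : finrank (ZMod 2) (Msg L × Msg L) = 2 * L := by
  rw [finrank_prod, finrank_fin_fun, two_mul]

theorem two_mul_le_finrank_answerKer_add (hC : IsLinear C) (n : Fin 2) (q : Q) :
    2 * L ≤ finrank (ZMod 2) (answerKer hC n q) + C.blen n q :=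
  finrank_msg_prod_msg.symm.trans_le (finrank_le_finrank_ker_add _)

theorem two_mul_le_finrank_answerKer_inf_add (hC : IsLinear C) (n : Fin 2) (q q' : Q) :
    2 * L ≤ finrank (ZMod 2) ↥(answerKer hC n q ⊓ answerKer hC n q') + C.stor n := by
  have hle : LinearMap.ker (storageMap hC n) ≤ answerKer hC n q ⊓ answerKer hC n q' :=
    le_inf (LinearMap.ker_le_ker_comp _ _) (LinearMap.ker_le_ker_comp _ _)
  calc 2 * L ≤ finrank (ZMod 2) (LinearMap.ker (storageMap hC n)) + C.stor n :=
        finrank_msg_prod_msg.symm.trans_le (finrank_le_finrank_ker_add _)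
    _ ≤ _ := Nat.add_le_add_right (Submodule.finrank_mono hle) _

theorem finrank_answerKer_add_le (hC : IsLinear C) (qq : Q × Q) :
    finrank (ZMod 2) (answerKer hC 0 qq.1) + finrank (ZMod 2) (answerKer hC 1 qq.2) ≤
      2 * L + finrank (ZMod 2) (jointKer hC qq) :=
  finrank_msg_prod_msg (L := L) ▸ finrank_add_finrank_le_finrank_add_finrank_inf _ _

theorem two_mul_add_finrank_le_stor_add (hC : IsLinear C) (hz : IsZeroError C) (n : Fin 2)
    {qq qq' : Q × Q} (hqq : C.P 0 qq ≠ 0) (hqq' : C.P 1 qq' ≠ 0)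
    (h : query (n + 1) qq = query (n + 1) qq') :
    2 * L + finrank (ZMod 2) ↥(answerKer hC n (query n qq') ⊓ targetKer L 0) +
        finrank (ZMod 2) ↥(answerKer hC n (query n qq) ⊓ targetKer L 1) +
        finrank (ZMod 2) (jointKer hC qq) + finrank (ZMod 2) (jointKer hC qq') ≤
      C.stor n + finrank (ZMod 2) (answerKer hC n (query n qq)) +
        finrank (ZMod 2) (answerKer hC n (query n qq')) := by
  have hle := jointKer_le_targetKer hC hz hqq
  have hle' := jointKer_le_targetKer hC hz hqq'
  rw [jointKer_eq hC n] at hle hle'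
  rw [← h] at hle'
  have hdim := finrank_inf_add_le_of_inf_le disjoint_targetKer hle hle'
  have hstor := two_mul_le_finrank_answerKer_inf_add hC n (query n qq) (query n qq')
  rw [jointKer_eq hC n qq, jointKer_eq hC n qq', ← h]
  omega

/-- The dimension of the kernel of the answer of database `n` to query `q`, as a real number so that
it can be averaged over the queries. -/
noncomputable def answerKerDim (hC : IsLinear C) (n : Fin 2) (q : Q) : ℝ :=
  finrank (ZMod 2) (answerKer hC n q)

/-- The dimension of the space of messages with vanishing `k`-th message for which database `n`
answers query `q` by zero. -/
noncomputable def answerTargetKerDim (hC : IsLinear C) (n k : Fin 2) (q : Q) : ℝ :=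
  finrank (ZMod 2) ↥(answerKer hC n q ⊓ targetKer L k)

/-- The dimension of the joint kernel of the two answers. -/
noncomputable def jointKerDim (hC : IsLinear C) (qq : Q × Q) : ℝ :=
  finrank (ZMod 2) (jointKer hC qq)

theorem dotProduct_query_eq (C : CodeBase L Q) (n : Fin 2) (f : Q → ℝ) :
    C.P 0 ⬝ᵥ (f ∘ query n) = C.P 1 ⬝ᵥ (f ∘ query n) :=
  dotProduct_comp_eq_of_marginal_eq (sum_P_query_eq C n) f

theorem dotProduct_jointKerDim_le (hC : IsLinear C) (hz : IsZeroError C) (n k : Fin 2) :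
    C.P k ⬝ᵥ jointKerDim hC ≤ C.P k ⬝ᵥ (answerTargetKerDim hC n k ∘ query n) := by
  refine dotProduct_mono_of_ne_zero (C.P_nonneg k) fun qq hqq => ?_
  refine Nat.cast_le.2 (Submodule.finrank_mono (le_inf ?_ (jointKer_le_targetKer hC hz hqq)))
  exact (jointKer_eq hC n qq).trans_le inf_le_left

theorem two_mul_add_dotProduct_jointKerDim_le (hC : IsLinear C) (hz : IsZeroError C) (n : Fin 2) :
    2 * (L : ℝ) + 2 * (C.P 0 ⬝ᵥ jointKerDim hC + C.P 1 ⬝ᵥ jointKerDim hC) ≤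
      C.stor n + 2 * (C.P 0 ⬝ᵥ (answerKerDim hC n ∘ query n)) := by
  have hwedge : 2 * (L : ℝ) - C.stor n ≤
      C.P 0 ⬝ᵥ ((answerKerDim hC n - answerTargetKerDim hC n 1) ∘ query n - jointKerDim hC) +
        C.P 1 ⬝ᵥ ((answerKerDim hC n - answerTargetKerDim hC n 0) ∘ query n - jointKerDim hC) := by
    refine le_dotProduct_add_dotProduct_of_marginal_eq (C.P_nonneg 0) (C.P_nonneg 1) (C.P_sum 1)
      (sum_P_query_eq C (n + 1)) fun qq qq' h hqq hqq' => ?_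
    have hdim : 2 * (L : ℝ) + answerTargetKerDim hC n 0 (query n qq') +
        answerTargetKerDim hC n 1 (query n qq) + jointKerDim hC qq + jointKerDim hC qq' ≤
        C.stor n + answerKerDim hC n (query n qq) + answerKerDim hC n (query n qq') := by
      unfold answerKerDim answerTargetKerDim jointKerDim
      exact_mod_cast two_mul_add_finrank_le_stor_add hC hz n hqq hqq' h
    simp only [Pi.sub_apply, Function.comp_apply]
    linarith
  have hjoint₀ := dotProduct_jointKerDim_le hC hz n 0
  have hjoint₁ := dotProduct_jointKerDim_le hC hz n 1
  rw [dotProduct_query_eq] at hjoint₀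
  rw [← dotProduct_query_eq] at hjoint₁
  simp only [Pi.sub_comp, dotProduct_sub, ← dotProduct_query_eq C n (answerKerDim hC n)] at hwedge
  linarith

theorem two_mul_le_dotProduct_answerKerDim_add (hC : IsLinear C) (n : Fin 2) :
    2 * (L : ℝ) ≤ C.P 0 ⬝ᵥ (answerKerDim hC n ∘ query n) + betaRate C n := by
  have hbeta : betaRate C n = C.P 0 ⬝ᵥ ((fun q => (C.blen n q : ℝ)) ∘ query n) := rfl
  rw [hbeta, ← dotProduct_add, ← dotProduct_const_of_sum_eq_one (C.P_sum 0) (2 * (L : ℝ))]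
  refine dotProduct_mono_of_ne_zero (C.P_nonneg 0) fun qq _ => ?_
  simp only [Pi.add_apply, Function.comp_apply, answerKerDim]
  exact_mod_cast two_mul_le_finrank_answerKer_add hC n (query n qq)

theorem dotProduct_answerKerDim_add_le (hC : IsLinear C) (k : Fin 2) :
    C.P k ⬝ᵥ (answerKerDim hC 0 ∘ query 0) + C.P k ⬝ᵥ (answerKerDim hC 1 ∘ query 1) ≤
      2 * L + C.P k ⬝ᵥ jointKerDim hC := by
  rw [← dotProduct_add, ← dotProduct_const_of_sum_eq_one (C.P_sum k) (2 * (L : ℝ)),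
    ← dotProduct_add]
  refine dotProduct_mono_of_ne_zero (C.P_nonneg k) fun qq _ => ?_
  simp only [Pi.add_apply, Function.comp_apply, answerKerDim, jointKerDim]
  exact_mod_cast finrank_answerKer_add_le hC qq

theorem twelve_mul_le_stor_add_betaRate (hC : IsLinear C) (hz : IsZeroError C) :
    12 * (L : ℝ) ≤ ((C.stor 0 + C.stor 1 : ℕ) : ℝ) + 6 * (betaRate C 0 + betaRate C 1) := by
  have hstor₀ := two_mul_add_dotProduct_jointKerDim_le hC hz 0
  have hstor₁ := two_mul_add_dotProduct_jointKerDim_le hC hz 1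
  have hbeta₀ := two_mul_le_dotProduct_answerKerDim_add hC 0
  have hbeta₁ := two_mul_le_dotProduct_answerKerDim_add hC 1
  have hjoint₀ := dotProduct_answerKerDim_add_le hC 0
  have hjoint₁ := dotProduct_answerKerDim_add_le hC 1
  rw [← dotProduct_query_eq, ← dotProduct_query_eq] at hjoint₁
  push_cast
  linarith

theorem six_le_of_linAchievable {ab : ℝ × ℝ} (h : LinAchievable ab) :
    6 ≤ ab.1 + 6 * ab.2 := by
  refine le_of_forall_pos_le_add fun ε hε => ?_
  obtain ⟨L₀, hL₀⟩ := h (ε / 7) (by positivity)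
  obtain ⟨C, hz, hC, hstor, hbeta⟩ := hL₀ (L₀ + 1) (Nat.le_succ L₀)
  have hbound := twelve_mul_le_stor_add_betaRate hC hz
  have hpos : (0 : ℝ) < ((L₀ + 1 : ℕ) : ℝ) := by positivity
  refine le_of_mul_le_mul_left ?_ hpos
  linarith

end LinearConverse

section Partitions

theorem sum_stdP (k : Fin 2) : ∑ qq, stdP k qq = 1 := by
  fin_cases k <;> norm_num [stdP, Fintype.sum_prod_type, Fin.sum_univ_two]

theorem sum_stdP_query_eq (k n q : Fin 2) :
    (∑ qq, if query n qq = q then stdP k qq else 0) = 1 / 2 := by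
  fin_cases k <;> fin_cases n <;> fin_cases q <;>
    simp [query, stdP, Fintype.sum_prod_type, Fin.sum_univ_two]

theorem stdP_zero_ne_zero {qq : Fin 2 × Fin 2} (h : stdP 0 qq ≠ 0) : qq.1 = qq.2 := by
  by_contra hqq
  exact h (by simp [stdP, hqq])

theorem stdP_one_ne_zero {qq : Fin 2 × Fin 2} (h : stdP 1 qq ≠ 0) : qq.1 ≠ qq.2 := by
  intro hqq
  exact h (by simp [stdP, hqq])

theorem exists_binary_encoding {W : Type*} [Finite W] (r : Setoid W) {b : ℕ}
    (hr : Nat.card (Quotient r) ≤ 2 ^ b) :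
    ∃ e : W → Fin b → ZMod 2, ∀ w w', e w = e w' ↔ r w w' := by
  have := Fintype.ofFinite (Quotient r)
  obtain ⟨f⟩ : Nonempty (Quotient r ↪ (Fin b → ZMod 2)) :=
    Function.Embedding.nonempty_of_card_le (by simpa [Nat.card_eq_fintype_card] using hr)
  exact ⟨fun w => f (Quotient.mk r w), fun w w' => by rw [f.injective.eq_iff, Quotient.eq]⟩

theorem target_eq_of_partitions {r : Fin 2 → Fin 2 → Setoid (Msg L × Msg L)}
    (hfst : ∀ q, r 0 q ⊓ r 1 q ≤ Setoid.ker Prod.fst)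
    (hsnd : ∀ q q', q ≠ q' → r 0 q ⊓ r 1 q' ≤ Setoid.ker Prod.snd)
    {k : Fin 2} {qq : Fin 2 × Fin 2} (hqq : stdP k qq ≠ 0) {w w' : Msg L × Msg L}
    (h₀ : r 0 qq.1 w w') (h₁ : r 1 qq.2 w w') : target k w = target k w' := by
  fin_cases k
  · rw [stdP_zero_ne_zero hqq] at h₀
    exact hfst _ ⟨h₀, h₁⟩
  · exact hsnd _ _ (stdP_one_ne_zero hqq) ⟨h₀, h₁⟩

/- Database `n` answers query `q` with the class of the pair of messages in the partition `r n q`,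
so it only needs to store the class in the common refinement of `r n 0` and `r n 1`. -/
theorem exists_code_of_partitions (r : Fin 2 → Fin 2 → Setoid (Msg L × Msg L)) (a b : Fin 2 → ℕ)
    (hfst : ∀ q, r 0 q ⊓ r 1 q ≤ Setoid.ker Prod.fst)
    (hsnd : ∀ q q', q ≠ q' → r 0 q ⊓ r 1 q' ≤ Setoid.ker Prod.snd)
    (ha : ∀ n, Nat.card (Quotient (r n 0 ⊓ r n 1)) ≤ 2 ^ a n)
    (hb : ∀ n q, Nat.card (Quotient (r n q)) ≤ 2 ^ b n) :
    ∃ C : Code L, IsZeroError C.base ∧ (∀ n, C.base.stor n = a n) ∧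
      ∀ n, betaRate C.base n = b n := by
  choose phi hphi using fun n => exists_binary_encoding _ (ha n)
  choose enc henc using fun n (q : Fin 2) => exists_binary_encoding _ (hb n q)
  let ans (n q : Fin 2) : (Fin (a n) → ZMod 2) → Fin (b n) → ZMod 2 :=
    Function.extend (phi n) (enc n q) 0
  have hans (n q : Fin 2) (w : Msg L × Msg L) : ans n q (phi n w) = enc n q w := by
    refine Function.FactorsThrough.extend_apply (fun w w' h => (henc n q w w').2 ?_) _ w
    have hinf := Setoid.inf_iff_and.1 ((hphi n w w').1 h)
    fin_cases q
    exacts [hinf.1, hinf.2]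
  have hdec (k : Fin 2) (qq : Fin 2 × Fin 2) (hqq : stdP k qq ≠ 0) :
      Function.FactorsThrough (target k) fun w => (enc 0 qq.1 w, enc 1 qq.2 w) :=
    fun w w' h => target_eq_of_partitions hfst hsnd hqq ((henc 0 qq.1 w w').1 (congrArg Prod.fst h))
      ((henc 1 qq.2 w w').1 (congrArg Prod.snd h))
  let C : CodeBase L (Fin 2) :=
    { P := stdP
      P_nonneg := fun k qq => by unfold stdP; positivity
      P_sum := sum_stdP
      stor := a
      phi := phi
      blen := fun n _ => b n
      ans := ans
      dec := fun k q₁ q₂ x y =>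
        Function.extend (fun w => (enc 0 q₁ w, enc 1 q₂ w)) (target k) 0 (x, y)
      privacy := fun n q _ =>
        congrArg (· * _) ((sum_stdP_query_eq 0 n q).trans (sum_stdP_query_eq 1 n q).symm) }
  have hzero : IsZeroError C := fun k w qq hqq => by
    simp only [retrieved, C, hans]
    exact (hdec k qq hqq).extend_apply 0 w
  have hbeta (n : Fin 2) : betaRate C n = b n := by
    simp only [betaRate, C, ← Finset.sum_mul, sum_stdP, one_mul]
  exact ⟨⟨Fin 2, C⟩, hzero, fun _ => rfl, hbeta⟩

end Partitions

section RandomChoices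

open Finset

/- Union bound: a uniformly random `v` misses a given `x` with probability `(#Gᶜ / |X|) ^ t`. -/
theorem exists_covering_translates {X : Type*} [AddGroup X] [Fintype X] [DecidableEq X]
    (G : Finset X) {t : ℕ} (h : Fintype.card X * #Gᶜ ^ t < Fintype.card X ^ t) :
    ∃ v : Fin t → X, ∀ x, ∃ j, x + v j ∈ G := by
  let missing (x : X) : Finset (Fin t → X) :=
    Fintype.piFinset fun _ => Gᶜ.map (Equiv.addLeft (-x)).toEmbedding
  have hcard : #(univ.biUnion missing) < #(univ : Finset (Fin t → X)) := by
    refine lt_of_le_of_lt card_biUnion_le ?_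
    simpa [missing] using h
  obtain ⟨v, -, hv⟩ := exists_mem_notMem_of_card_lt_card hcard
  exact ⟨v, by simpa [missing] using hv⟩

theorem mul_pow_lt_pow_of_log_mul_lt {N g : ℝ} {t : ℕ} (hN : 0 < N) (hg : g ≤ N)
    (h : Real.log N * N < t * g) : N * (N - g) ^ t < N ^ t := by
  have hdecay : (1 - g / N) ^ t < N⁻¹ := by
    calc (1 - g / N) ^ t ≤ Real.exp (-(g / N)) ^ t :=
          pow_le_pow_left₀ (sub_nonneg.2 ((div_le_one hN).2 hg)) (Real.one_sub_le_exp_neg _) t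
      _ = Real.exp (-(t * g / N)) := by rw [← Real.exp_nat_mul]; ring_nf
      _ < Real.exp (-Real.log N) := by
          rw [Real.exp_lt_exp, neg_lt_neg_iff]
          exact (lt_div_iff₀ hN).2 h
      _ = N⁻¹ := by rw [Real.exp_neg, Real.exp_log hN]
  calc N * (N - g) ^ t = N ^ t * (N * (1 - g / N) ^ t) := by
        rw [one_sub_div hN.ne', div_pow]; field_simp
    _ < N ^ t * (N * N⁻¹) := by gcongr
    _ = N ^ t := by rw [mul_inv_cancel₀ hN.ne', mul_one]

variable {α β : Type*} [Fintype α] [DecidableEq α] [Fintype β] [DecidableEq β]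

theorem card_filter_apply_eq_mul_card_le {a a' : α} (h : a ≠ a') :
    #{f : α → β | f a = f a'} * Fintype.card β ≤ Fintype.card (α → β) := by
  rw [← card_univ (α := β), ← card_product]
  refine card_le_card_of_injOn (fun p => Function.update p.1 a p.2) (fun _ _ => mem_univ _) ?_
  rintro ⟨f, b⟩ hf ⟨g, c⟩ hg hfg
  have hb : b = c := by simpa using congrFun hfg a
  refine Prod.ext (funext fun x => ?_) hb
  have hrest (y : α) (hy : y ≠ a) : f y = g y := by simpa [hy] using congrFun hfg y
  rcases eq_or_ne x a with rfl | hx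
  · simp only [coe_product, Set.mem_prod, coe_filter, Set.mem_ofPred_eq, mem_univ,
      true_and] at hf hg
    exact hf.1.trans ((hrest a' h.symm).trans hg.1.symm)
  · exact hrest x hx

theorem card_filter_exists_apply_eq_mul_card_le {P : Finset (α × α)}
    (hP : ∀ p ∈ P, p.1 ≠ p.2) :
    #{f : α → β | ∃ p ∈ P, f p.1 = f p.2} * Fintype.card β ≤ #P * Fintype.card (α → β) := by
  have hunion : ({f : α → β | ∃ p ∈ P, f p.1 = f p.2} : Finset (α → β)) =
      P.biUnion fun p => {f | f p.1 = f p.2} := by ext; simp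
  calc _ ≤ (∑ p ∈ P, #{f : α → β | f p.1 = f p.2}) * Fintype.card β :=
        Nat.mul_le_mul_right _ (hunion ▸ card_biUnion_le)
    _ ≤ ∑ _p ∈ P, Fintype.card (α → β) := by
        rw [sum_mul]
        exact sum_le_sum fun p hp => card_filter_apply_eq_mul_card_le (hP p hp)
    _ = _ := by rw [sum_const, smul_eq_mul]

/- For a random `f`, each point of `T` is bad with probability at most `1 / 2`. -/
theorem exists_large_collisionFree_subset {α β X : Type*} [Finite α] [Fintype β] [Nonempty β]
    (T : Finset X) {P : X → Finset (α × α)} (hP : ∀ x ∈ T, ∀ p ∈ P x, p.1 ≠ p.2)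
    (hcard : ∀ x ∈ T, 2 * #(P x) ≤ Fintype.card β) :
    ∃ f : α → β, ∃ G ⊆ T, #T ≤ 2 * #G ∧ ∀ x ∈ G, ∀ p ∈ P x, f p.1 ≠ f p.2 := by
  classical
  have := Fintype.ofFinite α
  let bad (f : α → β) : Finset X := {x ∈ T | ∃ p ∈ P x, f p.1 = f p.2}
  have hprob (x : X) (hx : x ∈ T) :
      2 * #{f : α → β | ∃ p ∈ P x, f p.1 = f p.2} ≤ Fintype.card (α → β) := by
    refine Nat.le_of_mul_le_mul_right ?_ (Fintype.card_pos (α := β))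
    have h := card_filter_exists_apply_eq_mul_card_le (β := β) (hP x hx)
    nlinarith [Nat.mul_le_mul_right (Fintype.card (α → β)) (hcard x hx)]
  have hsum : ∑ f : α → β, 2 * #(bad f) ≤ ∑ _f : α → β, #T := by
    calc ∑ f : α → β, 2 * #(bad f)
        = ∑ x ∈ T, 2 * #{f : α → β | ∃ p ∈ P x, f p.1 = f p.2} := by
          simp only [← mul_sum]
          exact congrArg _ (sum_card_bipartiteAbove_eq_sum_card_bipartiteBelow _)
      _ ≤ ∑ _x ∈ T, Fintype.card (α → β) := sum_le_sum hprob
      _ = ∑ _f : α → β, #T := by simp [mul_comm]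
  obtain ⟨f, -, hf⟩ := exists_le_of_sum_le univ_nonempty hsum
  refine ⟨f, T \ bad f, sdiff_subset, ?_, fun x hx p hp hcol => ?_⟩
  · have := le_card_sdiff (bad f) T
    omega
  · exact (mem_sdiff.1 hx).2 (mem_filter.2 ⟨(mem_sdiff.1 hx).1, p, hp, hcol⟩)

end RandomChoices

section BalancedWords

open Finset
open scoped Nat

variable {ι κ : Type*} [Fintype ι] [DecidableEq κ]

/-- The set of positions at which the symbol `c` occurs in the word `x`. -/
def cell (c : κ) (x : ι → κ) : Finset ι := {i | x i = c}

theorem mem_cell {c : κ} {x : ι → κ} {i : ι} : i ∈ cell c x ↔ x i = c := by simp [cell]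

variable [DecidableEq ι]

theorem cell_subset_compl_cell {c d : κ} (h : c ≠ d) (x : ι → κ) : cell c x ⊆ (cell d x)ᶜ :=
  fun _ hi => mem_compl.2 fun hi' => h ((mem_cell.1 hi).symm.trans (mem_cell.1 hi'))

variable [Fintype κ]

/-- The words in which each symbol occurs exactly `m` times. -/
def balanced (ι κ : Type*) [Fintype ι] [DecidableEq ι] [Fintype κ] [DecidableEq κ] (m : ℕ) :
    Finset (ι → κ) := {x | ∀ c, #(cell c x) = m}

theorem mem_balanced {m : ℕ} {x : ι → κ} : x ∈ balanced ι κ m ↔ ∀ c, #(cell c x) = m := by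
  simp [balanced]

theorem balanced_nonempty {m : ℕ} (h : Fintype.card ι = Fintype.card κ * m) :
    (balanced ι κ m).Nonempty := by
  obtain ⟨e⟩ : Nonempty (ι ≃ κ × Fin m) := Fintype.card_eq.1 (by simp [h])
  refine ⟨fun i => (e i).1, mem_balanced.2 fun c => ?_⟩
  have hcell : cell c (fun i => (e i).1) = ({c} ×ˢ univ).map e.symm.toEmbedding := by
    ext i
    simp [mem_cell, Prod.ext_iff, eq_comm]
  simp [hcell]

theorem smul_mem_balanced {m : ℕ} {x : ι → κ} (hx : x ∈ balanced ι κ m)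
    (σ : (Equiv.Perm ι)ᵈᵐᵃ) : σ • x ∈ balanced ι κ m := by
  refine mem_balanced.2 fun c => ?_
  have hcell : cell c (σ • x) = (cell c x).map (DomMulAct.mk.symm σ).symm.toEmbedding := by
    ext i
    simp [mem_cell, DomMulAct.smul_apply]
  rw [hcell, card_map, mem_balanced.1 hx c]

/- The balanced words contain an orbit of the permutations of `ι`, whose stabilizer permutes each
cell. -/
theorem factorial_le_card_balanced_mul {m : ℕ} (h : Fintype.card ι = Fintype.card κ * m) :
    (Fintype.card ι)! ≤ #(balanced ι κ m) * m ! ^ Fintype.card κ := by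
  obtain ⟨x, hx⟩ := balanced_nonempty h
  have horbit : (MulAction.orbit (Equiv.Perm ι)ᵈᵐᵃ x).ncard ≤ #(balanced ι κ m) := by
    rw [← Set.ncard_coe_finset]
    refine Set.ncard_le_ncard ?_
    rintro _ ⟨σ, rfl⟩
    exact smul_mem_balanced hx σ
  have hstab : Nat.card (MulAction.stabilizer (Equiv.Perm ι)ᵈᵐᵃ x) = m ! ^ Fintype.card κ := by
    calc Nat.card (MulAction.stabilizer (Equiv.Perm ι)ᵈᵐᵃ x)
        = Nat.card {σ : Equiv.Perm ι // x ∘ σ = x} :=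
          Nat.card_congr (DomMulAct.mk.symm.subtypeEquiv fun _ => DomMulAct.mem_stabilizer_iff)
      _ = ∏ c, (#(cell c x))! := by
          rw [Nat.card_eq_fintype_card, DomMulAct.stabilizer_card]
          simp only [Fintype.card_subtype, cell]
      _ = m ! ^ Fintype.card κ := by simp [mem_balanced.1 hx]
  calc (Fintype.card ι)! = Nat.card (Equiv.Perm ι)ᵈᵐᵃ := by
        rw [← Nat.card_congr DomMulAct.mk, Nat.card_perm, Nat.card_eq_fintype_card]
    _ = (MulAction.orbit (Equiv.Perm ι)ᵈᵐᵃ x).ncard * m ! ^ Fintype.card κ := by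
        rw [← (MulAction.stabilizer _ x).index_mul_card, MulAction.index_stabilizer, hstab]
    _ ≤ _ := Nat.mul_le_mul_right _ horbit

theorem four_pow_le_mul_card_balanced {m : ℕ} (hm : 0 < m) (hι : Fintype.card ι = 4 * m)
    (hκ : Fintype.card κ = 4) : 4 ^ (4 * m) ≤ 16 * m ^ 3 * #(balanced ι κ m) := by
  have hbal := factorial_le_card_balanced_mul (ι := ι) (κ := κ) (hκ.symm ▸ hι)
  rw [hι, hκ] at hbal
  have hfac (n : ℕ) : n.centralBinom * (n ! * n !) = (2 * n)! := by
    have h := Nat.choose_mul_factorial_mul_factorial (Nat.le_mul_of_pos_left n two_pos)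
    rwa [two_mul, Nat.add_sub_cancel, ← two_mul, mul_assoc] at h
  have hmultinomial :
      (2 * m).centralBinom * (m.centralBinom * m.centralBinom) ≤ #(balanced ι κ m) := by
    refine Nat.le_of_mul_le_mul_right (c := m ! ^ 4) ?_ (by positivity)
    calc _ = (2 * m).centralBinom *
          ((m.centralBinom * (m ! * m !)) * (m.centralBinom * (m ! * m !))) := by ring
      _ = (4 * m)! := by simp only [hfac, ← mul_assoc, Nat.reduceMul]
      _ ≤ _ := hbal
  have hm₁ := Nat.four_pow_le_two_mul_self_mul_centralBinom m hm
  have hm₂ := Nat.four_pow_le_two_mul_self_mul_centralBinom (2 * m) (by omega)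
  calc 4 ^ (4 * m) = 4 ^ (2 * m) * (4 ^ m * 4 ^ m) := by ring
    _ ≤ _ := Nat.mul_le_mul hm₂ (Nat.mul_le_mul hm₁ hm₁)
    _ = 16 * m ^ 3 * ((2 * m).centralBinom * (m.centralBinom * m.centralBinom)) := by ring
    _ ≤ _ := Nat.mul_le_mul_left _ hmultinomial

end BalancedWords

section RandomHashing

open Finset

/-- The pair of symbols whose positions are hashed into the answer of database 1 to query `q`. -/
def symA (q : Fin 2) : ZMod 2 × ZMod 2 := if q = 0 then (1, 1) else (0, 0)

/-- The pair of symbols whose positions form the answer of database 2 to query `q`. -/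
def symB (q : Fin 2) : ZMod 2 × ZMod 2 := if q = 0 then (1, 0) else (0, 1)

theorem symA_ne_symB : ∀ q r, symA q ≠ symB r := by decide

theorem fst_eq_of_symbols : ∀ (q : Fin 2) (c d : ZMod 2 × ZMod 2),
    (c = symA q ↔ d = symA q) → (c = symB q ↔ d = symB q) → c.1 = d.1 := by decide

theorem snd_eq_of_symbols : ∀ q r : Fin 2, q ≠ r → ∀ c d : ZMod 2 × ZMod 2,
    (c = symA q ↔ d = symA q) → (c = symB r ↔ d = symB r) → c.2 = d.2 := by decide

variable {ι : Type*} [Fintype ι] {m : ℕ}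

theorem apply_eq_iff_of_cell_eq {c : ZMod 2 × ZMod 2} {x y : ι → ZMod 2 × ZMod 2}
    (h : cell c x = cell c y) (i : ι) : x i = c ↔ y i = c := by
  rw [← mem_cell, h, mem_cell]

variable [DecidableEq ι]

/-- The sets `S` of `m` positions that could take the place of some `cell (symA q) x` next to some
`cell (symB r) x`, each paired with the cell it replaces. A hash function separating all these pairs
identifies `cell (symA q) x` once `cell (symB r) x` is known. -/
def confusablePairs (m : ℕ) (x : ι → ZMod 2 × ZMod 2) : Finset (Finset ι × Finset ι) :=
  univ.biUnion fun qr : Fin 2 × Fin 2 =>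
    ((powersetCard m (cell (symB qr.2) x)ᶜ).erase (cell (symA qr.1) x)) ×ˢ {cell (symA qr.1) x}

theorem fst_ne_snd_of_mem_confusablePairs {x : ι → ZMod 2 × ZMod 2} {p : Finset ι × Finset ι}
    (hp : p ∈ confusablePairs m x) : p.1 ≠ p.2 := by
  simp only [confusablePairs, mem_biUnion, mem_product, mem_erase, mem_singleton] at hp
  obtain ⟨qr, -, ⟨hne, -⟩, h⟩ := hp
  exact h ▸ hne

theorem card_confusablePairs_le (hι : Fintype.card ι = 4 * m) {x : ι → ZMod 2 × ZMod 2}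
    (hx : x ∈ balanced ι (ZMod 2 × ZMod 2) m) :
    #(confusablePairs m x) ≤ 4 * (3 * m).choose m := by
  refine (card_biUnion_le_card_mul _ _ ((3 * m).choose m) fun qr _ => ?_).trans (by simp)
  rw [card_product, card_singleton, mul_one]
  refine card_erase_le.trans (le_of_eq ?_)
  rw [card_powersetCard, card_compl, mem_balanced.1 hx, hι]
  congr 1
  omega

theorem mem_confusablePairs {x y : ι → ZMod 2 × ZMod 2}
    (hy : y ∈ balanced ι (ZMod 2 × ZMod 2) m) {q r : Fin 2}
    (hB : cell (symB r) x = cell (symB r) y) (hA : cell (symA q) y ≠ cell (symA q) x) :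
    (cell (symA q) y, cell (symA q) x) ∈ confusablePairs m x := by
  refine mem_biUnion.2 ⟨(q, r), mem_univ _, mem_product.2 ⟨mem_erase.2 ⟨hA, ?_⟩, by simp⟩⟩
  rw [mem_powersetCard, hB]
  exact ⟨cell_subset_compl_cell (symA_ne_symB q r) y, mem_balanced.1 hy _⟩

theorem exists_hash (hι : Fintype.card ι = 4 * m) :
    ∃ f : Finset ι → Fin (8 * (3 * m).choose m), ∃ G ⊆ balanced ι (ZMod 2 × ZMod 2) m,
      #(balanced ι (ZMod 2 × ZMod 2) m) ≤ 2 * #G ∧ ∀ x ∈ G, ∀ y ∈ G, ∀ q r,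
        f (cell (symA q) x) = f (cell (symA q) y) → cell (symB r) x = cell (symB r) y →
          cell (symA q) x = cell (symA q) y := by
  have hpos : 0 < (3 * m).choose m := Nat.choose_pos (by omega)
  have : NeZero (8 * (3 * m).choose m) := ⟨by positivity⟩
  obtain ⟨f, G, hG, hcard, hsep⟩ :=
    exists_large_collisionFree_subset (β := Fin (8 * (3 * m).choose m))
      (balanced ι (ZMod 2 × ZMod 2) m) (P := confusablePairs m)
      (fun x _ p hp => fst_ne_snd_of_mem_confusablePairs hp) (fun x hx => by
        have := card_confusablePairs_le hι hx
        rw [Fintype.card_fin]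
        omega)
  refine ⟨f, G, hG, hcard, fun x hx y hy q r hf hB => ?_⟩
  by_contra hA
  exact hsep x hx _ (mem_confusablePairs (hG hy) hB (Ne.symm hA)) hf.symm

theorem exists_covering_of_balanced (hm : 0 < m) (hι : Fintype.card ι = 4 * m)
    {G : Finset (ι → ZMod 2 × ZMod 2)} (hG : #(balanced ι (ZMod 2 × ZMod 2) m) ≤ 2 * #G) :
    ∃ v : Fin (256 * m ^ 4) → ι → ZMod 2 × ZMod 2, ∀ x, ∃ j, x + v j ∈ G := by
  have hcard : Fintype.card (ι → ZMod 2 × ZMod 2) = 4 ^ (4 * m) := by simp [hι]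
  have hdensity : 4 ^ (4 * m) ≤ 32 * m ^ 3 * #G := by
    calc 4 ^ (4 * m) ≤ 16 * m ^ 3 * #(balanced ι (ZMod 2 × ZMod 2) m) :=
          four_pow_le_mul_card_balanced hm hι (by simp)
      _ ≤ 16 * m ^ 3 * (2 * #G) := Nat.mul_le_mul_left _ hG
      _ = 32 * m ^ 3 * #G := by ring
  have hlog : Real.log ((4 : ℝ) ^ (4 * m)) < 8 * m := by
    have hm' : (0 : ℝ) < m := Nat.cast_pos.2 hm
    have hlog4 : Real.log 4 = 2 * Real.log 2 := by
      rw [show (4 : ℝ) = 2 ^ 2 by norm_num, Real.log_pow, Nat.cast_ofNat]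
    rw [Real.log_pow, hlog4]
    push_cast
    nlinarith [Real.log_two_lt_d9]
  have hcompl : #Gᶜ = 4 ^ (4 * m) - #G := by rw [card_compl, hcard]
  have hle : #G ≤ 4 ^ (4 * m) := hcard ▸ card_le_univ G
  refine exists_covering_translates G ?_
  rw [hcard, hcompl, ← Nat.cast_lt (α := ℝ)]
  push_cast [hle]
  refine mul_pow_lt_pow_of_log_mul_lt (by positivity) (by exact_mod_cast hle) ?_
  calc Real.log ((4 : ℝ) ^ (4 * m)) * 4 ^ (4 * m) < 8 * m * 4 ^ (4 * m) := by gcongr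
    _ ≤ 8 * m * (32 * m ^ 3 * #G) := by gcongr; exact_mod_cast hdensity
    _ = ((256 * m ^ 4 : ℕ) : ℝ) * #G := by push_cast; ring

/- Pad the pair of messages to a word of length `4 * m` and translate it into the set of hashable
balanced words; the translate used is part of every answer. -/
theorem exists_labelling (hm : 0 < m) (hL : L ≤ 4 * m) :
    ∃ (j : Msg L × Msg L → Fin (256 * m ^ 4))
      (y : Msg L × Msg L → Fin (4 * m) → ZMod 2 × ZMod 2)
      (f : Finset (Fin (4 * m)) → Fin (8 * (3 * m).choose m)),
      (∀ w, y w ∈ balanced _ _ m) ∧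
      ∀ w w' q r, j w = j w' → f (cell (symA q) (y w)) = f (cell (symA q) (y w')) →
        cell (symB r) (y w) = cell (symB r) (y w') →
          (q = r → w.1 = w'.1) ∧ (q ≠ r → w.2 = w'.2) := by
  obtain ⟨f, G, hG, hcard, hf⟩ := exists_hash (ι := Fin (4 * m)) (Fintype.card_fin _)
  obtain ⟨v, hv⟩ := exists_covering_of_balanced hm (Fintype.card_fin _) hcard
  let pad (w : Msg L × Msg L) : Fin (4 * m) → ZMod 2 × ZMod 2 :=
    Function.extend (Fin.castLE hL) (fun k => (w.1 k, w.2 k)) 0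
  have hpad (w : Msg L × Msg L) (k : Fin L) : pad w (Fin.castLE hL k) = (w.1 k, w.2 k) :=
    (Fin.castLE_injective hL).extend_apply _ _ k
  choose j hj using fun w => hv (pad w)
  refine ⟨j, fun w => pad w + v (j w), f, fun w => hG (hj w), fun w w' q r hjj hh hB => ?_⟩
  have hA := hf _ (hj w) _ (hj w') q r hh hB
  refine ⟨?_, fun hqr => funext fun k => ?_⟩
  · rintro rfl
    funext k
    simpa [hjj, hpad] using fst_eq_of_symbols q _ _
      (apply_eq_iff_of_cell_eq hA (Fin.castLE hL k)) (apply_eq_iff_of_cell_eq hB _)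
  · simpa [hjj, hpad] using snd_eq_of_symbols q r hqr _ _
      (apply_eq_iff_of_cell_eq hA (Fin.castLE hL k)) (apply_eq_iff_of_cell_eq hB _)

theorem card_quotient_le_of_ker_le {W Y : Type*} {r : Setoid W} {f : W → Y} {T : Finset Y}
    (hT : ∀ w, f w ∈ T) (hr : Setoid.ker f ≤ r) : Nat.card (Quotient r) ≤ #T := by
  have hinj : Function.Injective fun c : Quotient r => (⟨f c.out, hT c.out⟩ : T) := fun c d h => by
    rw [← Quotient.out_equiv_out]
    exact hr (congrArg Subtype.val h)
  simpa using Nat.card_le_card_of_injective _ hinj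

theorem card_quotient_inf_ker_le {W K Y : Type*} [Fintype K] {j : W → K} {f g : W → Y}
    {T : Finset Y} {U : Y → Finset Y} {c : ℕ} (hf : ∀ w, f w ∈ T) (hg : ∀ w, g w ∈ U (f w))
    (hU : ∀ t ∈ T, #(U t) = c) :
    Nat.card (Quotient (Setoid.ker (fun w => (j w, f w)) ⊓ Setoid.ker fun w => (j w, g w))) ≤
      Fintype.card K * (#T * c) := by
  refine (card_quotient_le_of_ker_le (f := fun w => (j w, (⟨f w, g w⟩ : Σ _ : Y, Y)))
    (T := univ ×ˢ T.sigma U) (fun w => mem_product.2 ⟨mem_univ _, mem_sigma.2 ⟨hf w, hg w⟩⟩)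
    fun w w' h => ?_).trans_eq ?_
  · simp only [Setoid.ker_def, Prod.mk.injEq, Sigma.mk.injEq, heq_eq_eq] at h
    exact ⟨Prod.ext h.1 h.2.1, Prod.ext h.1 h.2.2⟩
  · rw [card_product, card_sigma, sum_const_nat hU, card_univ]

theorem exists_code_of_choose_le (hm : 0 < m) (hL : L ≤ 4 * m) (a b : Fin 2 → ℕ)
    (ha₀ : 256 * m ^ 4 * (8 * (3 * m).choose m) ^ 2 ≤ 2 ^ a 0)
    (ha₁ : 256 * m ^ 4 * ((4 * m).choose m * (3 * m).choose m) ≤ 2 ^ a 1)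
    (hb₀ : 256 * m ^ 4 * (8 * (3 * m).choose m) ≤ 2 ^ b 0)
    (hb₁ : 256 * m ^ 4 * (4 * m).choose m ≤ 2 ^ b 1) :
    ∃ C : Code L, IsZeroError C.base ∧ (∀ n, C.base.stor n = a n) ∧
      ∀ n, betaRate C.base n = b n := by
  obtain ⟨j, y, f, hy, hdec⟩ := exists_labelling hm hL
  have hB (w : Msg L × Msg L) (q : Fin 2) :
      cell (symB q) (y w) ∈ powersetCard m (univ : Finset (Fin (4 * m))) :=
    mem_powersetCard.2 ⟨subset_univ _, mem_balanced.1 (hy w) _⟩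
  have hBB (w : Msg L × Msg L) : cell (symB 1) (y w) ∈ powersetCard m (cell (symB 0) (y w))ᶜ :=
    mem_powersetCard.2 ⟨cell_subset_compl_cell (by decide) _, mem_balanced.1 (hy w) _⟩
  let answer₀ (q : Fin 2) (w : Msg L × Msg L) := (j w, f (cell (symA q) (y w)))
  let answer₁ (q : Fin 2) (w : Msg L × Msg L) := (j w, cell (symB q) (y w))
  refine exists_code_of_partitions
    ![fun q => Setoid.ker (answer₀ q), fun q => Setoid.ker (answer₁ q)] a b ?_ ?_ ?_ ?_
  · rintro q w w' ⟨h₀, h₁⟩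
    obtain ⟨hj, hf⟩ := Prod.ext_iff.1 h₀
    exact (hdec w w' q q hj hf (Prod.ext_iff.1 h₁).2).1 rfl
  · rintro q r hqr w w' ⟨h₀, h₁⟩
    obtain ⟨hj, hf⟩ := Prod.ext_iff.1 h₀
    exact (hdec w w' q r hj hf (Prod.ext_iff.1 h₁).2).2 hqr
  · refine Fin.forall_fin_two.2 ⟨le_trans ?_ ha₀, le_trans ?_ ha₁⟩
    · exact (card_quotient_inf_ker_le (fun w => mem_univ _) (fun w => mem_univ _)
        fun _ _ => rfl).trans_eq (by simp [sq])
    · refine (card_quotient_inf_ker_le (U := fun S => powersetCard m Sᶜ) (hB · 0) hBB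
        (c := (3 * m).choose m) fun S hS => ?_).trans_eq (by simp)
      rw [card_powersetCard, card_compl, (mem_powersetCard.1 hS).2, Fintype.card_fin]
      congr 1
      omega
  · refine Fin.forall_fin_two.2 ⟨fun q => le_trans ?_ hb₀, fun q => le_trans ?_ hb₁⟩
    · exact (card_quotient_le_of_ker_le (fun w => mem_univ (answer₀ q w)) le_rfl).trans_eq
        (by simp)
    · exact (card_quotient_le_of_ker_le (T := univ ×ˢ powersetCard m univ)
        (fun w => mem_product.2 ⟨mem_univ (j w), hB w q⟩) le_rfl).trans_eq (by simp)

end RandomHashing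

section Rates

open Filter Real

theorem choose_mul_pow_le (c m : ℕ) :
    ((c + 1) * m).choose m * c ^ (c * m) ≤ (c + 1) ^ ((c + 1) * m) := by
  rw [Nat.add_comm c 1, add_pow 1 c]
  have hm : m ∈ Finset.range ((1 + c) * m + 1) :=
    Finset.mem_range.2 (Nat.lt_succ_of_le (Nat.le_mul_of_pos_left m (by omega)))
  refine le_trans (le_of_eq ?_) (Finset.single_le_sum (fun _ _ => Nat.zero_le _) hm)
  rw [one_pow, one_mul, mul_comm, show (1 + c) * m - m = c * m by rw [add_mul]; omega]
  rfl

theorem logb_choose_le {c : ℕ} (hc : 0 < c) (m : ℕ) :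
    logb 2 (((c + 1) * m).choose m) ≤ m * ((c + 1) * logb 2 (c + 1) - c * logb 2 c) := by
  have hchoose : ((((c + 1) * m).choose m : ℕ) : ℝ) ≠ 0 := by
    exact_mod_cast (Nat.choose_pos (Nat.le_mul_of_pos_left m c.succ_pos)).ne'
  have hc' : (c : ℝ) ^ (c * m) ≠ 0 := by positivity
  have h : (((c + 1) * m).choose m : ℝ) * c ^ (c * m) ≤ (c + 1) ^ ((c + 1) * m) := by
    exact_mod_cast choose_mul_pow_le c m
  have hlog := logb_le_logb_of_le (b := 2) (by norm_num) (by positivity) h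
  rw [logb_mul hchoose hc', logb_pow, logb_pow] at hlog
  push_cast at hlog
  linarith

theorem logb_self_pow {b : ℝ} (hb : 1 < b) (k : ℕ) : logb b (b ^ k) = k := by
  rw [logb_pow, logb_self_eq_one hb, mul_one]

theorem logb_choose_three_le (m : ℕ) : logb 2 ((3 * m).choose m) ≤ m * (3 * logb 2 3 - 2) := by
  have h := logb_choose_le two_pos m
  norm_num at h
  exact h

theorem logb_choose_four_le (m : ℕ) : logb 2 ((4 * m).choose m) ≤ m * (8 - 3 * logb 2 3) := by
  have h := logb_choose_le three_pos m
  have h4 : logb 2 4 = 2 := by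
    rw [show (4 : ℝ) = 2 ^ 2 by norm_num, logb_self_pow one_lt_two, Nat.cast_ofNat]
  norm_num [h4] at h
  exact h

theorem clog_le_logb_add_one {K : ℕ} (hK : K ≠ 0) : (Nat.clog 2 K : ℝ) ≤ logb 2 K + 1 := by
  have h := Nat.ceil_lt_add_one (logb_nonneg one_lt_two (Nat.one_le_cast.2 (Nat.pos_of_ne_zero hK)))
  rw [← natCeil_logb_natCast]
  exact_mod_cast h.le

theorem clog_mul_le {m K : ℕ} (hm : 0 < m) (hK : K ≠ 0) :
    (Nat.clog 2 (256 * m ^ 4 * K) : ℝ) ≤ 9 + 4 * logb 2 m + logb 2 K := by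
  have hK' : (K : ℝ) ≠ 0 := Nat.cast_ne_zero.2 hK
  have h256 : logb 2 256 = 8 := by
    rw [show (256 : ℝ) = 2 ^ 8 by norm_num, logb_self_pow one_lt_two, Nat.cast_ofNat]
  refine (clog_le_logb_add_one (by positivity)).trans_eq ?_
  push_cast
  rw [logb_mul (by positivity) hK', logb_mul (by norm_num) (by positivity), h256, logb_pow]
  push_cast
  ring

theorem exists_code_rates_le {m : ℕ} (hm : 0 < m) (hL : L ≤ 4 * m) :
    ∃ C : Code L, IsZeroError C.base ∧
      ((C.base.stor 0 + C.base.stor 1 : ℕ) : ℝ) / 2 ≤ m * (3 * logb 2 3 + 1) + 12 + 4 * logb 2 m ∧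
      (betaRate C.base 0 + betaRate C.base 1) / 2 ≤ 3 * m + 11 + 4 * logb 2 m := by
  set C₃ := (3 * m).choose m
  set C₄ := (4 * m).choose m
  have hC₃ : C₃ ≠ 0 := (Nat.choose_pos (by omega)).ne'
  have hC₄ : C₄ ≠ 0 := (Nat.choose_pos (by omega)).ne'
  have hC₃' : (C₃ : ℝ) ≠ 0 := Nat.cast_ne_zero.2 hC₃
  have hC₄' : (C₄ : ℝ) ≠ 0 := Nat.cast_ne_zero.2 hC₄
  have h₃ : logb 2 C₃ ≤ m * (3 * logb 2 3 - 2) := logb_choose_three_le m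
  have h₄ : logb 2 C₄ ≤ m * (8 - 3 * logb 2 3) := logb_choose_four_le m
  have h₈ : logb 2 ((8 * C₃ : ℕ) : ℝ) = 3 + logb 2 C₃ := by
    rw [Nat.cast_mul, logb_mul (by norm_num) hC₃', Nat.cast_ofNat,
      show (8 : ℝ) = 2 ^ 3 by norm_num, logb_self_pow one_lt_two, Nat.cast_ofNat]
  have hstor₀ := clog_mul_le (K := (8 * C₃) ^ 2) hm (by positivity)
  have hstor₁ := clog_mul_le (K := C₄ * C₃) hm (by positivity)
  have hrate₀ := clog_mul_le (K := 8 * C₃) hm (by positivity)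
  have hrate₁ := clog_mul_le hm hC₄
  rw [Nat.cast_pow, logb_pow, h₈, Nat.cast_ofNat] at hstor₀
  rw [Nat.cast_mul C₄, logb_mul hC₄' hC₃'] at hstor₁
  rw [h₈] at hrate₀
  obtain ⟨C, hC, hstor, hrate⟩ := exists_code_of_choose_le hm hL
    ![Nat.clog 2 (256 * m ^ 4 * (8 * C₃) ^ 2), Nat.clog 2 (256 * m ^ 4 * (C₄ * C₃))]
    ![Nat.clog 2 (256 * m ^ 4 * (8 * C₃)), Nat.clog 2 (256 * m ^ 4 * C₄)]
    (Nat.le_pow_clog one_lt_two _) (Nat.le_pow_clog one_lt_two _)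
    (Nat.le_pow_clog one_lt_two _) (Nat.le_pow_clog one_lt_two _)
  refine ⟨C, hC, ?_, ?_⟩
  · rw [hstor, hstor, Nat.cast_add]
    simp only [Matrix.cons_val_zero, Matrix.cons_val_one]
    linarith
  · rw [hrate, hrate]
    simp only [Matrix.cons_val_zero, Matrix.cons_val_one]
    linarith

theorem eventually_const_add_mul_logb_le {ε : ℝ} (hε : 0 < ε) (b c d : ℝ) :
    ∀ᶠ L : ℕ in atTop, c + d * logb b L ≤ L * ε := by
  have hlog : (fun x : ℝ => c + d * logb b x) =o[atTop] (id : ℝ → ℝ) :=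
    (Asymptotics.isLittleO_const_id_atTop c).add
      (((isLittleO_log_id_atTop).const_mul_left (d / log b)).congr_left fun x => by
        rw [logb]; ring)
  filter_upwards [tendsto_natCast_atTop_atTop.eventually (hlog.def hε)] with L h
  rw [id, norm_natCast, mul_comm ε] at h
  exact (le_norm_self _).trans h

theorem logb_two_three_lt : logb 2 3 < 5 / 3 := by
  have h : logb 2 ((3 : ℝ) ^ 3) < logb 2 (2 ^ 5) :=
    logb_lt_logb (by norm_num) (by norm_num) (by norm_num)
  rw [logb_pow, logb_self_pow one_lt_two] at h
  norm_num at h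
  linarith

theorem achievable_logb_two_three : Achievable (1/4 + (3/4) * logb 2 3, 3/4) := by
  intro ε hε
  obtain ⟨L₀, h⟩ := eventually_atTop.1
    ((eventually_const_add_mul_logb_le hε 2 17 4).and (eventually_ge_atTop 1))
  refine ⟨L₀, fun L hL => ?_⟩
  obtain ⟨hsmall, hL₁⟩ := h L hL
  obtain ⟨m, hm, hLm, hmL, hmL'⟩ : ∃ m : ℕ, 0 < m ∧ L ≤ 4 * m ∧ 4 * m ≤ L + 3 ∧ m ≤ L :=
    ⟨(L + 3) / 4, by omega, by omega, by omega, by omega⟩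
  have hm4 : (m : ℝ) ≤ (L + 3) / 4 := by
    rw [le_div_iff₀ (by norm_num), mul_comm]
    exact_mod_cast hmL
  have hlog : logb 2 m ≤ logb 2 L :=
    logb_le_logb_of_le one_lt_two (Nat.cast_pos.2 hm) (Nat.cast_le.2 hmL')
  have hlog₃ : 0 ≤ logb 2 3 := logb_nonneg one_lt_two (by norm_num)
  obtain ⟨C, hC, hstor, hrate⟩ := exists_code_rates_le hm hLm
  refine ⟨C, hC, hstor.trans ?_, hrate.trans ?_⟩
  · calc m * (3 * logb 2 3 + 1) + 12 + 4 * logb 2 m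
        ≤ (L + 3) / 4 * (3 * logb 2 3 + 1) + 12 + 4 * logb 2 L := by gcongr
      _ ≤ L * (1 / 4 + 3 / 4 * logb 2 3 + ε) := by linarith [logb_two_three_lt]
  · linarith

end Rates

/-- There exists a pair `(ᾱ, β̄)` in the achievable storage-retrieval rate
region of the (2,2) PIR problem with `β̄ = 3/4` and `ᾱ + 6β̄ < 6` (namely
`ᾱ = 1/4 + (3/4)·log₂ 3 < 3/2`); consequently, non-linear (2,2) PIR codes achieve a
pair that is not achievable by any linear (2,2) PIR code. -/
theorem statement11 :
    ∃ ab : ℝ × ℝ, ab ∈ Region ∧ ab.2 = 3/4 ∧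
      ab.1 = 1/4 + (3/4) * Real.logb 2 3 ∧ ab.1 < 3/2 ∧
      ab.1 + 6 * ab.2 < 6 ∧ ¬ LinAchievable ab := by
  have hlog := logb_two_three_lt
  refine ⟨(1/4 + (3/4) * Real.logb 2 3, 3/4),
    achievable_logb_two_three, rfl, rfl, ?_, ?_, fun hlin => ?_⟩
  · linarith
  · linarith
  · have hsix := six_le_of_linAchievable hlin
    linarith

end PIR
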